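/- Let w : Fin n → ℚ and w' : Fin n' → ℚ be nondecreasing weight vectors, constant on subsets S ⊆ Fin n and S' ⊆ Fin n' respectively, and suppose (w, S) ≺ (w', S'). If there exists a set T₁ ⊆ S with |T₁| ≥ 3 and ∑_{i ∈ T₁} w i = 1 (a witness with T₂ = ∅ for the failure of condition (T) for (w, S)), then there exists T₁' ⊆ S' with |T₁'| ≥ 3 and ∑_{i ∈ T₁'} w' i = 1; in particular, condition (T) also fails for (w', S'). -/

import Mathlib

/-- A weight vector: positive entries summing to 2. -/
def IsWeightVector {n : ℕ} (w : Fin n → ℚ) : Prop :=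
  (∀ i, 0 < w i) ∧ ∑ i, w i = 2

/-- Condition INT of Deligne–Mostow. -/
def CondINT {n : ℕ} (w : Fin n → ℚ) : Prop :=
  ∀ i j : Fin n, i ≠ j → w i + w j < 1 → ∃ m : ℤ, (1 - w i - w j)⁻¹ = (m : ℚ)

/-- Condition ΣINT of Mostow for a subset `S`. -/
def CondSigmaINT {n : ℕ} (w : Fin n → ℚ) (S : Finset (Fin n)) : Prop :=
  (∀ i ∈ S, ∀ j ∈ S, w i = w j) ∧
  ∀ i j : Fin n, i ≠ j → w i + w j < 1 →
    ((i ∉ S ∨ j ∉ S) → ∃ m : ℤ, (1 - w i - w j)⁻¹ = (m : ℚ)) ∧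
    (i ∈ S → j ∈ S → ∃ m : ℤ, (1 - w i - w j)⁻¹ = (m : ℚ) / 2)

/-- Condition (T): there is no `T₁ ⊆ S`, `T₂ ⊆ Sᶜ` with `|T₁| ≥ 3` whose total weight is 1. -/
def CondT {n : ℕ} (w : Fin n → ℚ) (S : Finset (Fin n)) : Prop :=
  ¬ ∃ T₁ T₂ : Finset (Fin n), T₁ ⊆ S ∧ T₂ ⊆ Sᶜ ∧ 3 ≤ T₁.card ∧
      (∑ i ∈ T₁, w i) + (∑ i ∈ T₂, w i) = 1

/-- The partial order `(w, S) ≺ (w', S')` on Deligne–Mostow pairs. -/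
def Prec {n n' : ℕ} (w : Fin n → ℚ) (S : Finset (Fin n))
    (w' : Fin n' → ℚ) (S' : Finset (Fin n')) : Prop :=
  ∃ h : n ≤ n', (∀ i : Fin n, w' (Fin.castLE h i) ≤ w i) ∧
    S.card = S'.card ∧ ∀ i ∈ S, ∀ j ∈ S', w i = w' j

theorem sum_eq_sum_of_card_eq_of_forall_eq {ι κ M : Type*} [AddCommMonoid M]
    {f : ι → M} {g : κ → M} {s : Finset ι} {t : Finset κ}
    (hcard : s.card = t.card) (hfg : ∀ i ∈ s, ∀ j ∈ t, f i = g j) :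
    ∑ i ∈ s, f i = ∑ j ∈ t, g j := by
  rw [← Finset.sum_coe_sort s f, ← Finset.sum_coe_sort t g]
  exact Fintype.sum_equiv (Finset.equivOfCardEq hcard) _ _ fun i => hfg i i.2 _ (Subtype.prop _)

theorem exists_subset_card_eq_and_sum_eq {ι κ M : Type*} [AddCommMonoid M]
    {f : ι → M} {g : κ → M} {s : Finset ι} {t : Finset κ}
    (hcard : s.card ≤ t.card) (hfg : ∀ i ∈ s, ∀ j ∈ t, f i = g j) :
    ∃ u ⊆ t, u.card = s.card ∧ ∑ j ∈ u, g j = ∑ i ∈ s, f i := by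
  obtain ⟨u, hut, hu⟩ := Finset.exists_subset_card_eq hcard
  have hsum : ∑ i ∈ s, f i = ∑ j ∈ u, g j :=
    sum_eq_sum_of_card_eq_of_forall_eq hu.symm fun i hi j hj => hfg i hi j (hut hj)
  exact ⟨u, hut, hu, hsum.symm⟩

theorem not_condT_of_exists_subset_sum_eq_one {n : ℕ} {w : Fin n → ℚ} {S : Finset (Fin n)}
    (h : ∃ T ⊆ S, 3 ≤ T.card ∧ ∑ i ∈ T, w i = 1) : ¬ CondT w S := by
  obtain ⟨T, hTS, hcard, hsum⟩ := h
  exact not_not_intro ⟨T, ∅, hTS, Finset.empty_subset _, hcard, by simpa using hsum⟩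

theorem not_condT_of_prec_general {n n' : ℕ} {w : Fin n → ℚ} {w' : Fin n' → ℚ}
    {S : Finset (Fin n)} {S' : Finset (Fin n')}
    (hcard : S.card ≤ S'.card) (hval : ∀ i ∈ S, ∀ j ∈ S', w i = w' j)
    (h : ∃ T ⊆ S, 3 ≤ T.card ∧ ∑ i ∈ T, w i = 1) :
    (∃ T' ⊆ S', 3 ≤ T'.card ∧ ∑ i ∈ T', w' i = 1) ∧ ¬ CondT w' S' := by
  have hwitness : ∃ T' ⊆ S', 3 ≤ T'.card ∧ ∑ i ∈ T', w' i = 1 := by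
    obtain ⟨T, hTS, hT, hsum⟩ := h
    obtain ⟨T', hT'S', hT', hsum'⟩ := exists_subset_card_eq_and_sum_eq
      ((Finset.card_le_card hTS).trans hcard) fun i hi => hval i (hTS hi)
    exact ⟨T', hT'S', hT.trans_eq hT'.symm, hsum'.trans hsum⟩
  exact ⟨hwitness, not_condT_of_exists_subset_sum_eq_one hwitness⟩

/-- Reduction method: if `(w, S) ≺ (w', S')` and condition (T) fails for `(w, S)` with a
witness `T₁ ⊆ S` (and `T₂ = ∅`), then it also fails for `(w', S')`. -/
theorem not_condT_of_prec {n n' : ℕ} (w : Fin n → ℚ) (w' : Fin n' → ℚ)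
    (hw : IsWeightVector w) (hw' : IsWeightVector w')
    (hmono : Monotone w) (hmono' : Monotone w')
    (S : Finset (Fin n)) (S' : Finset (Fin n'))
    (hconst : ∀ i ∈ S, ∀ j ∈ S, w i = w j)
    (hconst' : ∀ i ∈ S', ∀ j ∈ S', w' i = w' j)
    (hprec : Prec w S w' S')
    (h : ∃ T₁ ⊆ S, 3 ≤ T₁.card ∧ ∑ i ∈ T₁, w i = 1) :
    (∃ T₁' ⊆ S', 3 ≤ T₁'.card ∧ ∑ i ∈ T₁', w' i = 1) ∧ ¬ CondT w' S' := by
  obtain ⟨_, _, hcard, hval⟩ := hprec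
  exact not_condT_of_prec_general hcard.le hval h
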